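/- Let d > 1 and let X be an ℝ^d-valued random variable with projection Lipschitz constant L_π and radial Lipschitz constant L_θ. Fix R > 0, ε > 0, δ > 0, and θ ∈ S^{d-1}, and let X^(n) = (X_1,…,X_n) be points of ℝ^d with ‖X_i‖ ≤ R for all i ≤ n. Let φ ∈ S^{d-1} satisfy |θ−φ| < ε·δ·(1+δ)^{-1}·(L_θ + L_π·R)^{-1}. If sup_{t ∈ ℝ} |F_θ(t) − F_{n,θ}(t)| < ε(1+δ)^{-1}, then sup_{t ∈ ℝ} |F_φ(t) − F_{n,φ}(t)| < ε. -/

import Mathlib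

open MeasureTheory RealInnerProductSpace

/-- The cdf of the projection of the random variable `X` in the direction `v`:
`F_v(t) = P(⟪X, v⟫ ≤ t)`. -/
noncomputable def projCdf {Ω : Type*} [MeasurableSpace Ω] {d : ℕ} (P : Measure Ω)
    (X : Ω → EuclideanSpace ℝ (Fin d)) (v : EuclideanSpace ℝ (Fin d)) (t : ℝ) : ℝ :=
  (P {ω | ⟪X ω, v⟫ ≤ t}).toReal

/-- The empirical cdf of a sample in the direction `v`:
`F_{n,v}(t) = n⁻¹ · #{i : ⟪Xs i, v⟫ ≤ t}`. -/
noncomputable def empCdf {d n : ℕ} (Xs : Fin n → EuclideanSpace ℝ (Fin d))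
    (v : EuclideanSpace ℝ (Fin d)) (t : ℝ) : ℝ :=
  (n : ℝ)⁻¹ * (Finset.univ.filter (fun i => ⟪Xs i, v⟫ ≤ t)).card

theorem empCdf_mono_shift {d n : ℕ} (Xs : Fin n → EuclideanSpace ℝ (Fin d))
    (u v : EuclideanSpace ℝ (Fin d)) (s t : ℝ)
    (h : ∀ i, ⟪Xs i, u⟫ ≤ s → ⟪Xs i, v⟫ ≤ t) : empCdf Xs u s ≤ empCdf Xs v t := by
  unfold empCdf
  apply mul_le_mul_of_nonneg_left _ (by positivity)
  norm_cast
  apply Finset.card_le_card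
  intro i hi
  simp only [Finset.mem_filter, Finset.mem_univ, true_and] at hi ⊢
  exact h i hi

theorem empCdf_bounds {d n : ℕ} (Xs : Fin n → EuclideanSpace ℝ (Fin d))
    (v : EuclideanSpace ℝ (Fin d)) (t : ℝ) : 0 ≤ empCdf Xs v t ∧ empCdf Xs v t ≤ 1 := by
  unfold empCdf
  refine ⟨by positivity, ?_⟩
  have h : ((Finset.univ.filter (fun i => ⟪Xs i, v⟫ ≤ t)).card : ℝ) ≤ n := by
    exact_mod_cast (Finset.card_le_univ _).trans (by simp)
  calc _ ≤ (n : ℝ)⁻¹ * n := mul_le_mul_of_nonneg_left h (by positivity)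
    _ ≤ 1 := inv_mul_le_one

theorem norm_sub_le_arccos {d : ℕ} (u v : EuclideanSpace ℝ (Fin d)) (hu : ‖u‖ = 1)
    (hv : ‖v‖ = 1) : ‖u - v‖ ≤ Real.arccos ⟪u, v⟫ := by
  have h1 := abs_le.1 (abs_real_inner_le_norm u v)
  rw [hu, hv] at h1
  have h2 := Real.one_sub_sq_div_two_le_cos (x := Real.arccos ⟪u, v⟫)
  rw [Real.cos_arccos (by linarith) (by linarith)] at h2
  have h3 := norm_sub_sq_real u v
  rw [hu, hv] at h3
  exact abs_le_of_sq_le_sq' (by linarith) (Real.arccos_nonneg _) |>.2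

/-- If `|θ−φ| < ε·δ·(1+δ)⁻¹·(L_θ + L_π·R)⁻¹` and the sup-distance between `F_θ` and
`F_{n,θ}` is less than `ε(1+δ)⁻¹`, then the sup-distance between `F_φ` and `F_{n,φ}` is
less than `ε`. -/
theorem supDist_proj_lt_of_close_direction {d : ℕ} (hd1 : 1 < d)
    {Ω : Type*} [MeasurableSpace Ω] (P : Measure Ω) [IsProbabilityMeasure P]
    (X : Ω → EuclideanSpace ℝ (Fin d)) (hX : Measurable X)
    (Lpi Lth : ℝ) (hLpi : 0 < Lpi) (hLth : 0 ≤ Lth)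
    (hLipPi : ∀ v : EuclideanSpace ℝ (Fin d), ‖v‖ = 1 →
      ∀ s t : ℝ, |projCdf P X v s - projCdf P X v t| ≤ Lpi * |s - t|)
    (hLipTh : ∀ t : ℝ, ∀ u v : EuclideanSpace ℝ (Fin d), ‖u‖ = 1 → ‖v‖ = 1 →
      |projCdf P X u t - projCdf P X v t| ≤ Lth * Real.arccos ⟪u, v⟫)
    (R ε δ : ℝ) (hR : 0 < R) (hε : 0 < ε) (hδ : 0 < δ)
    (θ φ : EuclideanSpace ℝ (Fin d)) (hθ : ‖θ‖ = 1) (hφ : ‖φ‖ = 1)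
    (hclose : Real.arccos ⟪θ, φ⟫ < ε * δ * (1 + δ)⁻¹ * (Lth + Lpi * R)⁻¹)
    {n : ℕ} (Xs : Fin n → EuclideanSpace ℝ (Fin d)) (hXs : ∀ i, ‖Xs i‖ ≤ R)
    (hsup : (⨆ t : ℝ, |projCdf P X θ t - empCdf Xs θ t|) < ε * (1 + δ)⁻¹) :
    (⨆ t : ℝ, |projCdf P X φ t - empCdf Xs φ t|) < ε := by
  set a := Real.arccos ⟪θ, φ⟫ with ha
  have hK : 0 < Lth + Lpi * R := by positivity
  have ha0 : 0 ≤ a := Real.arccos_nonneg _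
  have hKa : (Lth + Lpi * R) * a < ε * δ * (1 + δ)⁻¹ := by
    rw [← div_eq_mul_inv _ (Lth + Lpi * R), lt_div_iff₀ hK] at hclose
    linarith
  have hsum : ε * (1 + δ)⁻¹ + ε * δ * (1 + δ)⁻¹ = ε := by
    field_simp
  have hnorm := norm_sub_le_arccos θ φ hθ hφ
  have hin : ∀ i, |⟪Xs i, θ⟫ - ⟪Xs i, φ⟫| ≤ R * a := by
    intro i
    rw [← inner_sub_right]
    exact (abs_real_inner_le_norm _ _).trans
      (mul_le_mul (hXs i) hnorm (norm_nonneg _) hR.le)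
  have hbdd : BddAbove (Set.range fun t : ℝ => |projCdf P X θ t - empCdf Xs θ t|) := by
    refine ⟨1, ?_⟩
    rintro _ ⟨t, rfl⟩
    have h1 := empCdf_bounds Xs θ t
    have h2 : 0 ≤ projCdf P X θ t := ENNReal.toReal_nonneg
    have h3 : projCdf P X θ t ≤ 1 := measureReal_le_one
    exact abs_le.2 ⟨by linarith, by linarith⟩
  set S := ⨆ t : ℝ, |projCdf P X θ t - empCdf Xs θ t| with hS
  have hle : ∀ t, |projCdf P X θ t - empCdf Xs θ t| ≤ S := fun t => le_ciSup hbdd t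
  have hRa : 0 ≤ R * a := by positivity
  refine lt_of_le_of_lt (ciSup_le (c := S + (Lth + Lpi * R) * a) fun t => ?_) (by linarith)
  have e1 : empCdf Xs φ t ≤ empCdf Xs θ (t + R * a) :=
    empCdf_mono_shift _ _ _ _ _ fun i hi => by linarith [(abs_le.1 (hin i)).2]
  have e2 : empCdf Xs θ (t - R * a) ≤ empCdf Xs φ t :=
    empCdf_mono_shift _ _ _ _ _ fun i hi => by linarith [(abs_le.1 (hin i)).1]
  have l0 := abs_le.1 (hLipTh t θ φ hθ hφ)
  have l1 := abs_le.1 (hLipPi θ hθ (t + R * a) t)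
  have l2 := abs_le.1 (hLipPi θ hθ (t - R * a) t)
  rw [add_sub_cancel_left, abs_of_nonneg hRa] at l1
  rw [show t - R * a - t = -(R * a) by ring, abs_neg, abs_of_nonneg hRa] at l2
  have s1 := abs_le.1 (hle (t + R * a))
  have s2 := abs_le.1 (hle (t - R * a))
  rw [← ha] at l0
  have hx : (Lth + Lpi * R) * a = Lth * a + Lpi * (R * a) := by ring
  rw [hx]
  exact abs_le.2 ⟨by linarith [l0.1, l0.2, l1.1, l1.2, s1.1, s1.2],
    by linarith [l0.1, l0.2, l2.1, l2.2, s2.1, s2.2]⟩
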